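/- Let σ be a permutation of a finite set of size m and let P_σ be the associated permutation matrix acting on K^m for a commutative ring K. Then the characteristic polynomial det(t·I − P_σ) equals the product over the cycles c of σ of (t^{|c|} − 1), where |c| is the length of the cycle. -/

import Mathlib

open Polynomial in
/-- The characteristic polynomial of a transitive permutation. -/
theorem charpoly_aux (K : Type*) [CommRing K] (n : Type*) [Fintype n] [DecidableEq n] [Nonempty n]
    (τ : Equiv.Perm n) (h : ∀ x y, τ.SameCycle x y) :
    (Matrix.of fun i j : n => if τ i = j then (1 : K) else 0).charpoly
      = X ^ Fintype.card n - 1 := by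
  by_cases hτ : ∃ x, τ x = x
  · obtain ⟨x, hx⟩ := hτ
    have hall : ∀ y, x = y := by
      intro y
      obtain ⟨k, hk⟩ := h x y
      rw [← hk, Equiv.Perm.zpow_apply_eq_self_of_apply_eq_self hx]
    have : Unique n := ⟨⟨x⟩, fun y => (hall y).symm⟩
    rw [Matrix.charpoly, Matrix.det_unique, Fintype.card_unique]
    have h1 : τ default = default := Subsingleton.elim _ _
    simp [h1]
  · push Not at hτ
    have hsupp : τ.support = Finset.univ := by
      ext x; simp [hτ x]
    obtain ⟨x0⟩ := ‹Nonempty n›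
    have hcyc : τ.IsCycle := ⟨x0, hτ x0, fun y _ => h x0 y⟩
    have hne : (1 : Equiv.Perm n) ≠ τ := fun e => hτ x0 (by rw [← e]; rfl)
    rw [Matrix.charpoly, ← Matrix.det_transpose, Matrix.det_apply',
      Finset.sum_eq_add (1 : Equiv.Perm n) τ hne]
    · have e1 : ∀ i, ¬ i = τ i := fun i e => hτ i e.symm
      simp only [Matrix.transpose_apply, Matrix.charmatrix_apply, Matrix.of_apply]
      rw [hcyc.sign, hsupp]
      simp [Matrix.diagonal_apply, e1, hτ]
      ring_nf
      rw [pow_mul, ← pow_mul, mul_comm, pow_mul]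
      simp only [neg_one_sq, one_pow]
      ring
    · rintro π - ⟨h1, h2⟩
      have hex : ∃ i, π i ≠ i ∧ π i ≠ τ i := by
        by_contra hcon
        push Not at hcon
        have hi : ∃ i, π i ≠ i := by
          by_contra hc
          push Not at hc
          exact h1 (Equiv.ext hc)
        obtain ⟨i, hi⟩ := hi
        have hs : ∀ k : ℕ, π ((τ ^ k) i) ≠ (τ ^ k) i := by
          intro k
          induction k with
          | zero => simpa using hi
          | succ k ih =>
            rw [pow_succ', Equiv.Perm.mul_apply]
            intro he
            exact ih (by rw [← hcon _ ih] at he; exact π.injective he)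
        apply h2
        ext y
        obtain ⟨k, hk⟩ := (h i y).exists_nat_pow_eq
        rw [← hk]
        exact hcon _ (hs k)
      obtain ⟨i, hi1, hi2⟩ := hex
      rw [Finset.prod_eq_zero (Finset.mem_univ i), mul_zero]
      simp [Matrix.charmatrix_apply, Matrix.diagonal_apply, Ne.symm hi1, Ne.symm hi2]
    · simp
    · simp

open scoped Classical in
/-- The characteristic polynomial of a permutation matrix is the product,
over the cycles (orbits) of the permutation, of (t^{|c|} − 1). -/
theorem stmt_2 (K : Type*) [CommRing K] (n : Type*) [Fintype n] [DecidableEq n]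
    (m : ℕ) (hm : Fintype.card n = m) (σ : Equiv.Perm n) :
    (σ.permMatrix K).charpoly
      = ∏ c ∈ Finset.univ.image (fun x : n => Finset.univ.filter fun y => σ.SameCycle x y),
          (Polynomial.X ^ c.card - 1) := by
  set b : n → Finset n := fun x : n => Finset.univ.filter fun y => σ.SameCycle x y with hb
  have hbiff : ∀ x y, b x = b y ↔ σ.SameCycle x y := by
    intro x y
    constructor
    · intro e
      have : y ∈ b y := by simp [hb, Equiv.Perm.SameCycle.refl]
      rw [← e] at this
      simpa [hb] using this
    · intro e
      ext z
      simp only [hb, Finset.mem_filter, Finset.mem_univ, true_and]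
      exact ⟨fun h => e.symm.trans h, fun h => e.trans h⟩
  have hbσ : ∀ x, b (σ x) = b x := fun x => (hbiff _ _).2 (by simp [Equiv.Perm.SameCycle.refl])
  let f : Finset n ↪ Ordinal := ⟨Ordinal.typein WellOrderingRel, Ordinal.typein_injective _⟩
  have hM : (σ.permMatrix K).BlockTriangular (fun x => f (b x)) := by
    intro i j hij
    have : σ i ≠ j := by
      rintro rfl
      simp [hbσ] at hij
    simp [Equiv.Perm.permMatrix, PEquiv.toMatrix_apply, Equiv.toPEquiv_apply, this]
  rw [hM.charpoly]
  have himg : Finset.univ.image (fun x => f (b x)) = (Finset.univ.image b).map f := by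
    ext; simp
  rw [Finset.prod_congr (by convert himg) (fun _ _ => rfl), Finset.prod_map]
  refine Finset.prod_congr rfl ?_
  intro c hc
  obtain ⟨x, -, rfl⟩ := Finset.mem_image.1 hc
  have hτ : ∀ y, (f (b (σ y)) = f (b x)) ↔ (f (b y) = f (b x)) := by
    intro y; rw [hbσ]
  have : Nonempty {y // f (b y) = f (b x)} := ⟨⟨x, rfl⟩⟩
  have key := charpoly_aux K {y // f (b y) = f (b x)} (σ.subtypePerm hτ) (by
    rintro ⟨y, hy⟩ ⟨z, hz⟩
    rw [Equiv.Perm.sameCycle_subtypePerm]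
    exact (hbiff _ _).1 (f.injective (hy.trans hz.symm)))
  have hcard : Fintype.card {y // f (b y) = f (b x)} = (b x).card := by
    rw [Fintype.card_subtype]
    congr 1
    ext y
    simp only [Finset.mem_filter, Finset.mem_univ, true_and, f.injective.eq_iff, hbiff]
    simp [hb, Equiv.Perm.sameCycle_comm]
  rw [← hcard]
  convert key using 2
  ext ⟨i, hi⟩ ⟨j, hj⟩
  simp [Matrix.toSquareBlock, Matrix.toSquareBlockProp, Equiv.Perm.permMatrix,
    PEquiv.toMatrix_apply, Equiv.toPEquiv_apply, eq_comm]
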